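/- arXiv:2007.12290 — 6 statements merged into one kernel-verified Lean document; each statement's English description precedes it below -/
import Mathlib

section
/- Let 1 ≤ m ≤ 3, let μ > 0 and λ > −(2/3)μ. Then there exists η > 0 such that the St. Venant–Kirchhoff energy density ψ₀ is strongly convex with modulus η on Sᵐ, i.e. ψ₀(tA+(1−t)B) ≤ t ψ₀(A) + (1−t) ψ₀(B) − (η/2) t(1−t)‖A−B‖_F² for all A, B ∈ Sᵐ and t ∈ [0,1]. -/
open scoped Matrix

noncomputable section

/-- St. Venant–Kirchhoff elastic energy density `ψ₀(ε) = (λ/2)(tr ε)² + μ tr(ε²)`. -/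
def psi0 (m : ℕ) (lam mu : ℝ) (A : Matrix (Fin m) (Fin m) ℝ) : ℝ :=
  lam / 2 * A.trace ^ 2 + mu * (A * A).trace

/-- Squared Frobenius norm. -/
def frobSq {m : ℕ} (A : Matrix (Fin m) (Fin m) ℝ) : ℝ := ∑ i, ∑ j, A i j ^ 2

lemma psi0_identity (m : ℕ) (lam mu t : ℝ) (A B : Matrix (Fin m) (Fin m) ℝ) :
    psi0 m lam mu (t • A + (1 - t) • B)
      = t * psi0 m lam mu A + (1 - t) * psi0 m lam mu B
        - t * (1 - t) * psi0 m lam mu (A - B) := by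
  simp only [psi0, add_mul, mul_add, sub_mul, mul_sub, Matrix.trace_add, Matrix.trace_sub,
    Matrix.trace_smul, smul_mul_assoc, mul_smul_comm, smul_eq_mul, Matrix.trace_mul_comm B A]
  ring

lemma trace_sq_eq_frobSq {m : ℕ} (D : Matrix (Fin m) (Fin m) ℝ) (hD : D.IsSymm) :
    (D * D).trace = frobSq D := by
  simp only [frobSq, Matrix.trace, Matrix.diag, Matrix.mul_apply]
  refine Finset.sum_congr rfl fun i _ => Finset.sum_congr rfl fun j _ => ?_
  rw [hD.apply i j, sq]

lemma trace_sq_le {m : ℕ} (hm : m ≤ 3) (D : Matrix (Fin m) (Fin m) ℝ) :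
    D.trace ^ 2 ≤ 3 * frobSq D := by
  have h1 : D.trace ^ 2 ≤ (m : ℝ) * ∑ i, D i i ^ 2 := by
    have := sq_sum_le_card_mul_sum_sq (s := Finset.univ) (f := fun i : Fin m => D i i)
    simpa [Matrix.trace] using this
  have h2 : ∑ i, D i i ^ 2 ≤ frobSq D :=
    Finset.sum_le_sum fun i _ =>
      Finset.single_le_sum (f := fun j => D i j ^ 2) (fun j _ => sq_nonneg _) (Finset.mem_univ i)
  have h3 : (0 : ℝ) ≤ ∑ i, D i i ^ 2 := Finset.sum_nonneg fun i _ => sq_nonneg _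
  have h4 : (m : ℝ) ≤ 3 := by exact_mod_cast hm
  nlinarith

theorem stmt_0 (m : ℕ) (hm1 : 1 ≤ m) (hm3 : m ≤ 3) (mu lam : ℝ)
    (hmu : 0 < mu) (hlam : -(2 / 3) * mu < lam) :
    ∃ η > (0 : ℝ), ∀ A B : Matrix (Fin m) (Fin m) ℝ, A.IsSymm → B.IsSymm →
      ∀ t ∈ Set.Icc (0 : ℝ) 1,
        psi0 m lam mu (t • A + (1 - t) • B)
          ≤ t * psi0 m lam mu A + (1 - t) * psi0 m lam mu B
            - η / 2 * (t * (1 - t)) * frobSq (A - B) := by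
  refine ⟨min (2 * mu) (3 * lam + 2 * mu), lt_min (by linarith) (by linarith), ?_⟩
  intro A B hA hB t ht
  have hD : (A - B).IsSymm := hA.sub hB
  have hF : 0 ≤ frobSq (A - B) :=
    Finset.sum_nonneg fun i _ => Finset.sum_nonneg fun j _ => sq_nonneg _
  have key : min (2 * mu) (3 * lam + 2 * mu) / 2 * frobSq (A - B) ≤ psi0 m lam mu (A - B) := by
    have h := trace_sq_le hm3 (A - B)
    rw [psi0, trace_sq_eq_frobSq _ hD]
    rcases le_total 0 lam with hl | hl
    · have := min_le_left (2 * mu) (3 * lam + 2 * mu)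
      nlinarith [mul_le_mul_of_nonneg_right this hF, mul_nonneg hl (sq_nonneg (A - B).trace)]
    · have := min_le_right (2 * mu) (3 * lam + 2 * mu)
      nlinarith [mul_le_mul_of_nonneg_right this hF, mul_le_mul_of_nonpos_left h hl]
  have htt : 0 ≤ t * (1 - t) := mul_nonneg ht.1 (by linarith [ht.2])
  rw [psi0_identity]
  nlinarith [mul_le_mul_of_nonneg_left key htt]
end
end

section
/- Let m ≥ 1, μ > 0, λ ∈ ℝ with μ/m + λ/2 > 0, and let c > 0 with c ≠ 1. Then the function ε ↦ c(μ/m + λ/2)⟨tr ε⟩₊² + (μ/m + λ/2)⟨tr ε⟩₋² + μ‖dev ε‖_F² is not twice continuously differentiable on Sᵐ (it is not of class C²). -/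
open scoped Matrix

noncomputable section

attribute [local instance] Matrix.frobeniusSeminormedAddCommGroup
attribute [local instance] Matrix.frobeniusNormedAddCommGroup
attribute [local instance] Matrix.frobeniusNormedSpace

/-- The space `Sᵐ` of symmetric m×m real matrices, as a submodule of the matrix space
equipped with the Frobenius norm. -/
def SymMat (m : ℕ) : Submodule ℝ (Matrix (Fin m) (Fin m) ℝ) where
  carrier := {A | A.IsSymm}
  add_mem' := fun ha hb => ha.add hb
  zero_mem' := Matrix.isSymm_zero
  smul_mem' := fun c A hA => by
    show (c • A)ᵀ = c • A
    rw [Matrix.transpose_smul]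
    exact congrArg _ hA

/-- The degraded density `c ψ₀⁺ + ψ₀⁻` with the anisotropic volumetric splitting:
`ε ↦ c(μ/m + λ/2)⟨tr ε⟩₊² + (μ/m + λ/2)⟨tr ε⟩₋² + μ‖dev ε‖_F²`. -/
def psiVolDeg (m : ℕ) (mu lam c : ℝ) (x : SymMat m) : ℝ :=
  c * ((mu / m + lam / 2) * max (Matrix.trace (x : Matrix (Fin m) (Fin m) ℝ)) 0 ^ 2)
    + (mu / m + lam / 2) * min (Matrix.trace (x : Matrix (Fin m) (Fin m) ℝ)) 0 ^ 2
    + mu * ‖(x : Matrix (Fin m) (Fin m) ℝ)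
        - (Matrix.trace (x : Matrix (Fin m) (Fin m) ℝ) / (m : ℝ)) • (1 : Matrix (Fin m) (Fin m) ℝ)‖ ^ 2

theorem aux_second_deriv (g : ℝ → ℝ) (hg : ContDiff ℝ 2 g) (a b : ℝ)
    (hp : ∀ t, 0 < t → g t = a * t ^ 2) (hn : ∀ t, t < 0 → g t = b * t ^ 2) : a = b := by
  have hcont : Continuous (deriv (deriv g)) := by
    have h1 : ContDiff ℝ 1 (deriv g) := by
      have h2 : ContDiff ℝ (1 + 1) g := by simpa [one_add_one_eq_two] using hg
      exact (contDiff_succ_iff_deriv.1 h2).2.2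
    exact h1.continuous_deriv le_rfl
  have key : ∀ (s : Set ℝ) (k : ℝ), IsOpen s → (∀ t ∈ s, g t = k * t ^ 2) →
      ∀ t ∈ s, deriv (deriv g) t = 2 * k := by
    intro s k hs h t ht
    have h1 : ∀ t ∈ s, deriv g t = 2 * k * t := by
      intro t ht
      have he : g =ᶠ[nhds t] fun t => k * t ^ 2 := by
        filter_upwards [hs.mem_nhds ht] with u hu using h u hu
      rw [he.deriv_eq]
      have := ((hasDerivAt_pow 2 t).const_mul k).deriv
      rw [this]; push_cast; ring
    have he : deriv g =ᶠ[nhds t] fun t => 2 * k * t := by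
      filter_upwards [hs.mem_nhds ht] with u hu using h1 u hu
    rw [he.deriv_eq]
    simpa using ((hasDerivAt_id t).const_mul (2 * k)).deriv
  have kp := key (Set.Ioi 0) a isOpen_Ioi (fun t ht => hp t ht)
  have kn := key (Set.Iio 0) b isOpen_Iio (fun t ht => hn t ht)
  have ep : deriv (deriv g) 0 = 2 * a := by
    have : (0:ℝ) ∈ closure (Set.Ioi (0:ℝ)) := by simp
    exact closure_minimal (t := {t | deriv (deriv g) t = 2 * a}) kp
      (isClosed_eq hcont continuous_const) this
  have en : deriv (deriv g) 0 = 2 * b := by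
    have : (0:ℝ) ∈ closure (Set.Iio (0:ℝ)) := by simp
    exact closure_minimal (t := {t | deriv (deriv g) t = 2 * b}) kn
      (isClosed_eq hcont continuous_const) this
  linarith

theorem stmt_7 (m : ℕ) (hm : 1 ≤ m) (mu lam : ℝ) (hmu : 0 < mu)
    (hml : 0 < mu / m + lam / 2) (c : ℝ) (hc : 0 < c) (hc1 : c ≠ 1) :
    ¬ ContDiff ℝ 2 (psiVolDeg m mu lam c) := by
  intro h
  have hm0 : (0:ℝ) < m := by exact_mod_cast hm
  let e : SymMat m := ⟨1, Matrix.isSymm_one⟩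
  have hg : ContDiff ℝ 2 (fun t : ℝ => psiVolDeg m mu lam c (t • e)) :=
    h.comp (contDiff_id.smul contDiff_const)
  have hval : ∀ t : ℝ, psiVolDeg m mu lam c (t • e) =
      c * ((mu / m + lam / 2) * max (t * m) 0 ^ 2) + (mu / m + lam / 2) * min (t * m) 0 ^ 2 := by
    intro t
    have h1 : ((t • e : SymMat m) : Matrix (Fin m) (Fin m) ℝ) = t • 1 := rfl
    have h2 : Matrix.trace (t • (1 : Matrix (Fin m) (Fin m) ℝ)) = t * m := by
      simp [Matrix.trace_smul, Matrix.trace_one]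
    unfold psiVolDeg
    rw [h1, h2, mul_div_cancel_right₀ t hm0.ne', sub_self, norm_zero]
    ring
  have hab := aux_second_deriv _ hg (c * ((mu / m + lam / 2) * m ^ 2)) ((mu / m + lam / 2) * m ^ 2)
    (fun t ht => by
      have : 0 ≤ t * m := by positivity
      simp only [hval, max_eq_left this, min_eq_right this]; ring)
    (fun t ht => by
      have : t * m ≤ 0 := mul_nonpos_of_nonpos_of_nonneg ht.le hm0.le
      simp only [hval, max_eq_right this, min_eq_left this]; ring)
  have hK : (mu / m + lam / 2) * (m:ℝ) ^ 2 ≠ 0 := by positivity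
  exact hc1 (mul_right_cancel₀ hK (by rw [hab, one_mul]))
end
end

section
/- Let m ≥ 1, λ ≥ 0 and μ > 0. Then the spectral splitting functions ψ₀⁺ and ψ₀⁻, given by ψ₀^±(ε) = (λ/2)⟨Σᵢ Eig(ε)ᵢ⟩_±² + μ Σᵢ ⟨Eig(ε)ᵢ⟩_±², are convex functions on Sᵐ. -/
open scoped Matrix

noncomputable section

/-- `ψ₀⁺(ε) = (λ/2)⟨Σᵢ Eig(ε)ᵢ⟩₊² + μ Σᵢ ⟨Eig(ε)ᵢ⟩₊²` of the spectral splitting,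
extended by 0 off the set of symmetric (= real Hermitian) matrices. -/
def psiPlusSpec (m : ℕ) (lam mu : ℝ) (A : Matrix (Fin m) (Fin m) ℝ) : ℝ :=
  if h : A.IsHermitian then
    lam / 2 * max (∑ i, h.eigenvalues i) 0 ^ 2 + mu * ∑ i, max (h.eigenvalues i) 0 ^ 2
  else 0

/-- `ψ₀⁻(ε) = (λ/2)⟨Σᵢ Eig(ε)ᵢ⟩₋² + μ Σᵢ ⟨Eig(ε)ᵢ⟩₋²` of the spectral splitting,
extended by 0 off the set of symmetric (= real Hermitian) matrices. -/
def psiMinusSpec (m : ℕ) (lam mu : ℝ) (A : Matrix (Fin m) (Fin m) ℝ) : ℝ :=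
  if h : A.IsHermitian then
    lam / 2 * min (∑ i, h.eigenvalues i) 0 ^ 2 + mu * ∑ i, min (h.eigenvalues i) 0 ^ 2
  else 0

/-- Diagonal entries of an orthogonal conjugate of a diagonal matrix, and Jensen. -/
theorem jensen_conj {m : ℕ} {f : ℝ → ℝ} (hf : ConvexOn ℝ Set.univ f)
    (W : Matrix (Fin m) (Fin m) ℝ) (h1 : W * star W = 1) (h2 : star W * W = 1) (d : Fin m → ℝ) :
    ∑ i, f ((W * Matrix.diagonal d * star W) i i) ≤ ∑ j, f (d j) := by
  have e1 : ∀ i, ∑ j, W i j ^ 2 = 1 := fun i => by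
    have := congrFun (congrFun h1 i) i
    simpa [Matrix.mul_apply, Matrix.star_apply, sq] using this
  have e2 : ∀ j, ∑ i, W i j ^ 2 = 1 := fun i => by
    have := congrFun (congrFun h2 i) i
    simpa [Matrix.mul_apply, Matrix.star_apply, sq] using this
  have e3 : ∀ i, (W * Matrix.diagonal d * star W) i i = ∑ j, W i j ^ 2 * d j := fun i => by
    rw [Matrix.mul_apply]
    refine Finset.sum_congr rfl fun j _ => ?_
    simp [Matrix.mul_diagonal, Matrix.star_apply]
    ring
  calc ∑ i, f ((W * Matrix.diagonal d * star W) i i)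
      ≤ ∑ i, ∑ j, W i j ^ 2 * f (d j) := by
        refine Finset.sum_le_sum fun i _ => ?_
        rw [e3]
        have := hf.map_sum_le (t := Finset.univ) (w := fun j => W i j ^ 2) (p := d)
          (fun j _ => sq_nonneg _) (e1 i) (fun _ _ => Set.mem_univ _)
        simpa using this
    _ = ∑ j, f (d j) := by
        rw [Finset.sum_comm]
        refine Finset.sum_congr rfl fun j _ => ?_
        rw [← Finset.sum_mul, e2, one_mul]

theorem spectral_mul {m : ℕ} {A : Matrix (Fin m) (Fin m) ℝ} (hA : A.IsHermitian) :
    A = (hA.eigenvectorUnitary : Matrix (Fin m) (Fin m) ℝ) * Matrix.diagonal hA.eigenvalues *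
      star (hA.eigenvectorUnitary : Matrix (Fin m) (Fin m) ℝ) := by
  have := hA.spectral_theorem
  rw [Unitary.conjStarAlgAut_apply] at this
  simpa [Function.comp_def] using this

/-- Peierls inequality. -/
theorem peierls {m : ℕ} {f : ℝ → ℝ} (hf : ConvexOn ℝ Set.univ f)
    {A : Matrix (Fin m) (Fin m) ℝ} (hA : A.IsHermitian)
    (U : Matrix (Fin m) (Fin m) ℝ) (h1 : U * star U = 1) (h2 : star U * U = 1) :
    ∑ i, f ((star U * A * U) i i) ≤ ∑ j, f (hA.eigenvalues j) := by
  set V := (hA.eigenvectorUnitary : Matrix (Fin m) (Fin m) ℝ) with hV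
  have v1 : V * star V = 1 := Unitary.mul_star_self_of_mem hA.eigenvectorUnitary.2
  have v2 : star V * V = 1 := Unitary.star_mul_self_of_mem hA.eigenvectorUnitary.2
  have key := jensen_conj hf (star U * V)
    (by rw [star_mul, star_star, Matrix.mul_assoc, ← Matrix.mul_assoc V, v1, Matrix.one_mul, h2])
    (by rw [star_mul, star_star, Matrix.mul_assoc, ← Matrix.mul_assoc U, h1, Matrix.one_mul, v2])
    hA.eigenvalues
  have e : star U * A * U =
      star U * V * Matrix.diagonal hA.eigenvalues * star (star U * V) := by
    conv_lhs => rw [spectral_mul hA]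
    rw [star_mul, star_star]
    simp only [Matrix.mul_assoc, hV]
  rw [e]; exact key

theorem trace_convex {m : ℕ} {f : ℝ → ℝ} (hf : ConvexOn ℝ Set.univ f)
    {A B : Matrix (Fin m) (Fin m) ℝ} (hA : A.IsHermitian) (hB : B.IsHermitian) {a b : ℝ}
    (ha : 0 ≤ a) (hb : 0 ≤ b) (hab : a + b = 1) (hC : (a • A + b • B).IsHermitian) :
    ∑ i, f (hC.eigenvalues i) ≤ a * ∑ i, f (hA.eigenvalues i) + b * ∑ i, f (hB.eigenvalues i) := by
  set U := (hC.eigenvectorUnitary : Matrix (Fin m) (Fin m) ℝ) with hU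
  have h1 : U * star U = 1 := Unitary.mul_star_self_of_mem hC.eigenvectorUnitary.2
  have h2 : star U * U = 1 := Unitary.star_mul_self_of_mem hC.eigenvectorUnitary.2
  have e : ∀ i, hC.eigenvalues i = a * (star U * A * U) i i + b * (star U * B * U) i i := by
    intro i
    have h : star U * (a • A + b • B) * U = Matrix.diagonal hC.eigenvalues := by
      conv_lhs => rw [spectral_mul hC]
      rw [← hU, Matrix.mul_assoc U, ← Matrix.mul_assoc (star U), h2, Matrix.one_mul,
        Matrix.mul_assoc, h2, Matrix.mul_one]
    have h' := congrFun (congrFun h i) i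
    rw [Matrix.diagonal_apply_eq] at h'
    rw [← h']
    simp [Matrix.mul_add, Matrix.add_mul]
  calc ∑ i, f (hC.eigenvalues i)
      ≤ ∑ i, (a * f ((star U * A * U) i i) + b * f ((star U * B * U) i i)) := by
        refine Finset.sum_le_sum fun i _ => ?_
        rw [e]
        simpa using hf.2 (Set.mem_univ _) (Set.mem_univ _) ha hb hab
    _ = a * ∑ i, f ((star U * A * U) i i) + b * ∑ i, f ((star U * B * U) i i) := by
        rw [Finset.sum_add_distrib, Finset.mul_sum, Finset.mul_sum]
    _ ≤ _ := by
        have p := mul_le_mul_of_nonneg_left (peierls hf hA U h1 h2) ha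
        have q := mul_le_mul_of_nonneg_left (peierls hf hB U h1 h2) hb
        linarith

theorem sum_eig {m : ℕ} {A : Matrix (Fin m) (Fin m) ℝ} (hA : A.IsHermitian) :
    ∑ i, hA.eigenvalues i = A.trace := by
  have := hA.trace_eq_sum_eigenvalues
  simpa using this.symm

theorem combine {m : ℕ} {f : ℝ → ℝ} (hf : ConvexOn ℝ Set.univ f) {lam mu : ℝ}
    (hlam : 0 ≤ lam) (hmu : 0 < mu)
    {A B : Matrix (Fin m) (Fin m) ℝ} (hA : A.IsHermitian) (hB : B.IsHermitian) {a b : ℝ}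
    (ha : 0 ≤ a) (hb : 0 ≤ b) (hab : a + b = 1) (hC : (a • A + b • B).IsHermitian) :
    lam / 2 * f (∑ i, hC.eigenvalues i) + mu * ∑ i, f (hC.eigenvalues i) ≤
      a * (lam / 2 * f (∑ i, hA.eigenvalues i) + mu * ∑ i, f (hA.eigenvalues i)) +
      b * (lam / 2 * f (∑ i, hB.eigenvalues i) + mu * ∑ i, f (hB.eigenvalues i)) := by
  have p := mul_le_mul_of_nonneg_left (trace_convex hf hA hB ha hb hab hC) hmu.le
  have q : f (∑ i, hC.eigenvalues i) ≤
      a * f (∑ i, hA.eigenvalues i) + b * f (∑ i, hB.eigenvalues i) := by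
    rw [sum_eig, sum_eig, sum_eig, Matrix.trace_add, Matrix.trace_smul, Matrix.trace_smul]
    simpa using hf.2 (Set.mem_univ _) (Set.mem_univ _) ha hb hab
  have q' := mul_le_mul_of_nonneg_left q (by positivity : 0 ≤ lam / 2)
  linarith

theorem convex_pos : ConvexOn ℝ Set.univ (fun x : ℝ => max x 0 ^ 2) := by
  have h : ConvexOn ℝ Set.univ (fun x : ℝ => max x 0) :=
    (convexOn_id convex_univ).sup (convexOn_const 0 convex_univ)
  exact h.pow (fun x _ => le_max_right _ _) 2

theorem convex_neg : ConvexOn ℝ Set.univ (fun x : ℝ => min x 0 ^ 2) := by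
  have h : ConvexOn ℝ Set.univ (fun x : ℝ => max (-x) 0) :=
    (concaveOn_id convex_univ).neg.sup (convexOn_const 0 convex_univ)
  have h2 := h.pow (fun x _ => le_max_right _ _) 2
  refine h2.congr fun x _ => ?_
  have : max (-x) 0 = - min x 0 := by rw [← max_neg_neg, neg_zero]
  simp [this]

theorem convex_herm (m : ℕ) : Convex ℝ {A : Matrix (Fin m) (Fin m) ℝ | A.IsHermitian} := by
  intro A hA B hB a b _ _ _
  have hA' : Aᴴ = A := hA
  have hB' : Bᴴ = B := hB
  change (a • A + b • B)ᴴ = _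
  rw [Matrix.conjTranspose_add, Matrix.conjTranspose_smul, Matrix.conjTranspose_smul, hA', hB',
    star_trivial, star_trivial]

theorem stmt_10 (m : ℕ) (hm : 1 ≤ m) (lam mu : ℝ) (hlam : 0 ≤ lam) (hmu : 0 < mu) :
    ConvexOn ℝ {A : Matrix (Fin m) (Fin m) ℝ | A.IsHermitian} (psiPlusSpec m lam mu) ∧
    ConvexOn ℝ {A : Matrix (Fin m) (Fin m) ℝ | A.IsHermitian} (psiMinusSpec m lam mu) := by
  refine ⟨⟨convex_herm m, ?_⟩, ⟨convex_herm m, ?_⟩⟩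
  · intro A hA B hB a b ha hb hab
    have hC := convex_herm m hA hB ha hb hab
    simp only [Set.mem_ofPred_eq] at hA hB hC
    simp only [psiPlusSpec, dif_pos hA, dif_pos hB, dif_pos hC, smul_eq_mul]
    exact combine convex_pos hlam hmu hA hB ha hb hab hC
  · intro A hA B hB a b ha hb hab
    have hC := convex_herm m hA hB ha hb hab
    simp only [Set.mem_ofPred_eq] at hA hB hC
    simp only [psiMinusSpec, dif_pos hA, dif_pos hB, dif_pos hC, smul_eq_mul]
    exact combine convex_neg hlam hmu hA hB ha hb hab hC
end
end

section
/- Let m = 2, μ > 0, λ < 0 and 0 < k < −λ/(2μ). Then the fully damaged spectrally split density ε ↦ k ψ₀⁺(ε) + ψ₀⁻(ε) is not convex on S². (In fact along the segment D(t) = diag(−1,t), t ∈ (0,1), it equals kμt² + (λ/2)(t−1)² + μ, which is strictly concave in t.) -/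
open scoped Matrix

noncomputable section

theorem eig_diag_aux (t : ℝ) (h : (Matrix.diagonal ![(-1 : ℝ), t]).IsHermitian) :
    (h.eigenvalues 0 = -1 ∧ h.eigenvalues 1 = t) ∨
    (h.eigenvalues 0 = t ∧ h.eigenvalues 1 = -1) := by
  have h1 := h.trace_eq_sum_eigenvalues
  have h2 := h.det_eq_prod_eigenvalues
  simp [Matrix.trace, Fin.sum_univ_two, Fin.prod_univ_two, Matrix.det_diagonal] at h1 h2
  have h3 : (h.eigenvalues 0 + 1) * (h.eigenvalues 0 - t) = 0 := by
    have : h.eigenvalues 1 = -1 + t - h.eigenvalues 0 := by linarith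
    rw [this] at h2
    linarith
  rcases mul_eq_zero.mp h3 with h4 | h4
  · left; constructor <;> linarith
  · right; constructor <;> linarith

theorem val_diag_aux (mu lam k t : ℝ) (ht : t ∈ Set.Ioo (0 : ℝ) 1) :
    k * psiPlusSpec 2 lam mu (Matrix.diagonal ![(-1 : ℝ), t])
          + psiMinusSpec 2 lam mu (Matrix.diagonal ![(-1 : ℝ), t])
        = k * mu * t ^ 2 + lam / 2 * (t - 1) ^ 2 + mu := by
  have h : (Matrix.diagonal ![(-1 : ℝ), t]).IsHermitian := Matrix.isHermitian_diagonal _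
  obtain ⟨h0, h1⟩ := ht
  have a1 : max (-1 + t) 0 = 0 := max_eq_right (by linarith)
  have a2 : min (-1 + t) 0 = -1 + t := min_eq_left (by linarith)
  have a3 : max t 0 = t := max_eq_left h0.le
  have a4 : min t 0 = 0 := min_eq_right h0.le
  have a5 : max (-1 : ℝ) 0 = 0 := by norm_num
  have a6 : min (-1 : ℝ) 0 = -1 := by norm_num
  rw [psiPlusSpec, psiMinusSpec, dif_pos h, dif_pos h]
  simp only [Fin.sum_univ_two]
  rcases eig_diag_aux t h with ⟨e0, e1⟩ | ⟨e0, e1⟩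
  · rw [e0, e1, a1, a2, a3, a4, a5, a6]; ring
  · rw [e0, e1, add_comm t, a1, a2, a3, a4, a5, a6]; ring

theorem stmt_12 (mu lam k : ℝ) (hmu : 0 < mu) (hlam : lam < 0)
    (hk0 : 0 < k) (hk : k < -lam / (2 * mu)) :
    ¬ ConvexOn ℝ {A : Matrix (Fin 2) (Fin 2) ℝ | A.IsHermitian}
        (fun A => k * psiPlusSpec 2 lam mu A + psiMinusSpec 2 lam mu A) ∧
    ∀ t ∈ Set.Ioo (0 : ℝ) 1,
      k * psiPlusSpec 2 lam mu (Matrix.diagonal ![(-1 : ℝ), t])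
          + psiMinusSpec 2 lam mu (Matrix.diagonal ![(-1 : ℝ), t])
        = k * mu * t ^ 2 + lam / 2 * (t - 1) ^ 2 + mu := by
  refine ⟨fun hc => ?_, fun t ht => val_diag_aux mu lam k t ht⟩
  have hneg : k * mu + lam / 2 < 0 := by
    rw [lt_div_iff₀ (by positivity)] at hk
    linarith
  have hx : Matrix.diagonal ![(-1 : ℝ), 1 / 4] ∈
      {A : Matrix (Fin 2) (Fin 2) ℝ | A.IsHermitian} := Matrix.isHermitian_diagonal _
  have hy : Matrix.diagonal ![(-1 : ℝ), 3 / 4] ∈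
      {A : Matrix (Fin 2) (Fin 2) ℝ | A.IsHermitian} := Matrix.isHermitian_diagonal _
  have h2 : (0 : ℝ) ≤ 1 / 2 := by norm_num
  have h := hc.2 hx hy h2 h2 (by norm_num)
  have hm : (1 / 2 : ℝ) • Matrix.diagonal ![(-1 : ℝ), 1 / 4]
      + (1 / 2 : ℝ) • Matrix.diagonal ![(-1 : ℝ), 3 / 4] = Matrix.diagonal ![(-1 : ℝ), 1 / 2] := by
    ext i j
    fin_cases i <;> fin_cases j <;> simp <;> norm_num
  rw [hm] at h
  simp only [smul_eq_mul] at h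
  rw [val_diag_aux mu lam k (1 / 4) (by constructor <;> norm_num),
    val_diag_aux mu lam k (3 / 4) (by constructor <;> norm_num),
    val_diag_aux mu lam k (1 / 2) (by constructor <;> norm_num)] at h
  linarith
end
end

section
/- Let b > 0 and define g_d(d) := (exp(bd) − (b(d−1)+1)·exp(b)) / ((b−1)·exp(b) + 1). Then the denominator (b−1)e^b + 1 is strictly positive, g_d(0) = 1, g_d(1) = 0, g_d is differentiable, monotone decreasing on [0,1], maps [0,1] into [0,1], and g_d is strictly convex on [0,1]. -/
noncomputable section

/-- The exponential degradation function of Steinke and Kaliske: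
`g_d(d) = (exp(bd) − (b(d−1)+1)e^b) / ((b−1)e^b + 1)`. -/
def gD (b d : ℝ) : ℝ :=
  (Real.exp (b * d) - (b * (d - 1) + 1) * Real.exp b) / ((b - 1) * Real.exp b + 1)

theorem stmt_16 (b : ℝ) (hb : 0 < b) :
    0 < (b - 1) * Real.exp b + 1 ∧
    gD b 0 = 1 ∧ gD b 1 = 0 ∧
    Differentiable ℝ (gD b) ∧
    AntitoneOn (gD b) (Set.Icc 0 1) ∧
    Set.MapsTo (gD b) (Set.Icc 0 1) (Set.Icc 0 1) ∧
    StrictConvexOn ℝ (Set.Icc 0 1) (gD b) := by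
  have hD : 0 < (b - 1) * Real.exp b + 1 := by
    have h1 : -b + 1 < Real.exp (-b) := Real.add_one_lt_exp (by linarith)
    have h2 := mul_lt_mul_of_pos_right h1 (Real.exp_pos b)
    rw [← Real.exp_add, neg_add_cancel, Real.exp_zero] at h2
    linarith
  have h0 : gD b 0 = 1 := by
    unfold gD
    rw [div_eq_one_iff_eq hD.ne', mul_zero, Real.exp_zero]
    ring
  have h1 : gD b 1 = 0 := by
    unfold gD
    simp
  have hanti : AntitoneOn (gD b) (Set.Icc 0 1) := by
    intro x hx y hy hxy
    unfold gD
    apply div_le_div_of_nonneg_right _ hD.le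
    have e1 : b * (x - y) + 1 ≤ Real.exp (b * (x - y)) := Real.add_one_le_exp _
    have e2 := mul_le_mul_of_nonneg_right e1 (Real.exp_pos (b * y)).le
    rw [← Real.exp_add, show b * (x - y) + b * y = b * x by ring] at e2
    have e3 : Real.exp (b * y) ≤ Real.exp b :=
      Real.exp_le_exp.mpr (by nlinarith [hy.2])
    have e4 := mul_le_mul_of_nonneg_left e3 (mul_nonneg hb.le (sub_nonneg.mpr hxy))
    linarith
  refine ⟨hD, h0, h1, ?_, hanti, ?_, convex_Icc 0 1, ?_⟩
  · unfold gD
    fun_prop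
  · intro x hx
    constructor
    · rw [← h1]
      exact hanti hx ⟨zero_le_one, le_rfl⟩ hx.2
    · rw [← h0]
      exact hanti ⟨le_rfl, zero_le_one⟩ hx hx.1
  · intro x _ y _ hxy p q hp hq hpq
    have hne : b * x ≠ b * y := fun h => hxy (mul_left_cancel₀ hb.ne' h)
    have key := strictConvexOn_exp.2 (Set.mem_univ (b * x)) (Set.mem_univ (b * y)) hne hp hq hpq
    simp only [smul_eq_mul] at key ⊢
    rw [show p * (b * x) + q * (b * y) = b * (p * x + q * y) by ring] at key
    unfold gD
    rw [← mul_div_assoc, ← mul_div_assoc, ← add_div]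
    apply div_lt_div_of_pos_right _ hD
    obtain rfl : q = 1 - p := by linarith
    linarith
end
end

section
/- Let E be a finite-dimensional real normed vector space, J : E → ℝ ∪ {∞} with domain dom J := {x : J(x) < ∞}, and assume: J is proper (dom J ≠ ∅), lower semicontinuous, coercive (all sublevel sets {x : J(x) ≤ c} are bounded), and continuous on dom J. Let V₁, …, V_n be linear subspaces of E such that for every V ∈ dom J and every i, the function J has a unique global minimizer on the affine subspace V + Vᵢ. Let M₁, …, M_n : E → E be maps with Mᵢ(dom J) ⊆ dom J and Mᵢ(V) − V ∈ Vᵢ for all V ∈ dom J, satisfying: (monotonicity) J(Mᵢ(V)) ≤ J(V) for all V ∈ dom J; (continuity) J ∘ Mᵢ is continuous on dom J; (stability) J(Mᵢ(V)) < J(V) whenever J(V) is not minimal on V + Vᵢ. Let (U^ν)_{ν≥0} be a sequence with U⁰ ∈ dom J such that for each ν, setting U^{ν+1/2} := (M_n ∘ ⋯ ∘ M₁)(U^ν), the next iterate U^{ν+1} ∈ E satisfies J(U^{ν+1}) ≤ J(U^{ν+1/2}). Then every accumulation point U of the sequence (U^ν) is stationary in the sense that J(U) ≤ J(U + V) for all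 V ∈ Vᵢ and all i. -/
noncomputable section

theorem stmt_18 {E : Type*} [NormedAddCommGroup E] [NormedSpace ℝ E]
    [FiniteDimensional ℝ E]
    -- J : E → ℝ ∪ {∞}, encoded as an `EReal`-valued function never taking the value −∞
    (J : E → EReal) (hbot : ∀ x, J x ≠ ⊥)
    (D : Set E) (hD : D = {x | J x < ⊤})
    -- J is proper
    (hproper : D.Nonempty)
    -- J is lower semicontinuous
    (hlsc : LowerSemicontinuous J)
    -- J is coercive: all sublevel sets are bounded
    (hcoercive : ∀ c : ℝ, Bornology.IsBounded {x | J x ≤ (c : EReal)})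
    -- J is continuous on its domain
    (hcont : ContinuousOn J D)
    -- the subspaces V₁, …, V_n
    (n : ℕ) (V : Fin n → Submodule ℝ E)
    -- J has a unique global minimizer on each affine subspace V + Vᵢ, V ∈ dom J
    (hunique : ∀ x ∈ D, ∀ i : Fin n,
      ∃! y : E, y - x ∈ V i ∧ ∀ z : E, z - x ∈ V i → J y ≤ J z)
    -- the local correction operators M₁, …, M_n
    (M : Fin n → E → E)
    (hmaps : ∀ i : Fin n, ∀ x ∈ D, M i x ∈ D)
    (hVmem : ∀ i : Fin n, ∀ x ∈ D, M i x - x ∈ V i)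
    -- monotonicity
    (hmono : ∀ i : Fin n, ∀ x ∈ D, J (M i x) ≤ J x)
    -- continuity of J ∘ Mᵢ
    (hMcont : ∀ i : Fin n, ContinuousOn (fun x => J (M i x)) D)
    -- stability
    (hstable : ∀ i : Fin n, ∀ x ∈ D,
      (∃ z : E, z - x ∈ V i ∧ J z < J x) → J (M i x) < J x)
    -- the iterates: U^{ν+1/2} = (M_n ∘ ⋯ ∘ M₁)(U^ν) and J(U^{ν+1}) ≤ J(U^{ν+1/2})
    (U : ℕ → E) (hU0 : U 0 ∈ D)
    (hstep : ∀ ν : ℕ, J (U (ν + 1)) ≤ J (Fin.foldl n (fun y i => M i y) (U ν)))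
    -- an accumulation point of the sequence
    (Ustar : E) (hacc : MapClusterPt Ustar Filter.atTop U) :
    ∀ i : Fin n, ∀ v ∈ V i, J Ustar ≤ J (Ustar + v) := by
  classical
  have memD : ∀ x, x ∈ D ↔ J x < ⊤ := fun x => by rw [hD]; rfl
  -- the (compact) initial sublevel set
  set K : Set E := {x | J x ≤ J (U 0)} with hK
  have hU0' : J (U 0) < ⊤ := (memD _).1 hU0
  have hKD : ∀ x ∈ K, x ∈ D := fun x hx => (memD x).2 (lt_of_le_of_lt hx hU0')
  have hKclosed : IsClosed K := hlsc.isClosed_preimage (J (U 0))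
  have hKbdd : Bornology.IsBounded K := by
    have h := hcoercive (J (U 0)).toReal
    rwa [EReal.coe_toReal hU0'.ne (hbot _)] at h
  have : ProperSpace E := FiniteDimensional.proper ℝ E
  have hKc : IsCompact K := Metric.isCompact_of_isClosed_isBounded hKclosed hKbdd
  have hfold : ∀ (l : List (Fin n)) (y : E), y ∈ D →
      J (l.foldl (fun y i => M i y) y) ≤ J y := by
    intro l
    induction l with
    | nil => intro y _; exact le_rfl
    | cons i l ih =>
      intro y hy
      exact (ih (M i y) (hmaps i y hy)).trans (hmono i y hy)
  have hstep' : ∀ ν : ℕ, J (U (ν + 1)) ≤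
      J ((List.finRange n).foldl (fun y i => M i y) (U ν)) := by
    intro ν
    rw [← Fin.foldl_eq_foldl_finRange]
    exact hstep ν
  have hUK : ∀ ν, U ν ∈ K := by
    intro ν
    induction ν with
    | zero => exact le_refl (J (U 0))
    | succ k ih =>
      exact (hstep' k).trans ((hfold _ _ (hKD _ ih)).trans ih)
  have hanti : Antitone (fun ν => J (U ν)) :=
    antitone_nat_of_succ_le fun ν => (hstep' ν).trans (hfold _ _ (hKD _ (hUK ν)))
  obtain ⟨F, hF, hFU⟩ := mapClusterPt_iff_ultrafilter.1 hacc
  have hlimcont : ∀ (g : E → EReal) (w : ℕ → E) (x : E), ContinuousOn g D → x ∈ D →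
      (∀ ν, w ν ∈ D) → Filter.Tendsto w F (nhds x) →
      Filter.Tendsto (fun ν => g (w ν)) F (nhds (g x)) := by
    intro g w x hg hx hw ht
    exact (hg x hx).tendsto.comp
      (tendsto_nhdsWithin_iff.2 ⟨ht, Filter.Eventually.of_forall hw⟩)
  have hSK : Ustar ∈ K := hKclosed.mem_of_tendsto hFU (Filter.Eventually.of_forall hUK)
  have hSD := hKD _ hSK
  have hJU : Filter.Tendsto (fun ν => J (U ν)) F (nhds (J Ustar)) :=
    hlimcont J U Ustar hcont hSD (fun ν => hKD _ (hUK ν)) hFU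
  have hJinf := tendsto_atTop_iInf hanti
  have hceq : (⨅ ν, J (U ν)) = J Ustar := tendsto_nhds_unique (hJinf.mono_left hF) hJU
  have hJs : Filter.Tendsto (fun ν => J (U (ν + 1))) F (nhds (J Ustar)) := by
    rw [← hceq]
    exact (hJinf.comp (Filter.tendsto_add_atTop_nat 1)).mono_left hF
  have key : ∀ (l : List (Fin n)) (w : ℕ → E), (∀ ν, w ν ∈ K) →
      Filter.Tendsto w F (nhds Ustar) → (∀ ν, J (w ν) ≤ J (U ν)) →
      (∀ ν, J (U (ν + 1)) ≤ J (l.foldl (fun y i => M i y) (w ν))) →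
      ∀ i ∈ l, ∀ v ∈ V i, J Ustar ≤ J (Ustar + v) := by
    intro l
    induction l with
    | nil => intro w _ _ _ _ i hi; simp at hi
    | cons i l ih =>
      intro w hwK hwt hwU hwl
      have hwD : ∀ ν, w ν ∈ D := fun ν => hKD _ (hwK ν)
      have hle : ∀ ν, J (M i (w ν)) ≤ J (U ν) := fun ν => (hmono i _ (hwD ν)).trans (hwU ν)
      have hge : ∀ ν, J (U (ν + 1)) ≤ J (M i (w ν)) := fun ν =>
        (hwl ν).trans (hfold l _ (hmaps i _ (hwD ν)))
      have hlim : Filter.Tendsto (fun ν => J (M i (w ν))) F (nhds (J Ustar)) :=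
        tendsto_of_tendsto_of_tendsto_of_le_of_le hJs hJU hge hle
      have hlim2 := hlimcont (fun x => J (M i x)) w Ustar (hMcont i) hSD hwD hwt
      have heq : J (M i Ustar) = J Ustar := tendsto_nhds_unique hlim2 hlim
      have hmin : ∀ z : E, z - Ustar ∈ V i → J Ustar ≤ J z := by
        intro z hz
        by_contra hcon
        exact (hstable i Ustar hSD ⟨z, hz, not_le.1 hcon⟩).ne heq
      have hMK : ∀ ν, M i (w ν) ∈ K := fun ν => (hmono i _ (hwD ν)).trans (hwK ν)
      obtain ⟨W, hWK, hW⟩ := hKc.ultrafilter_le_nhds (F.map fun ν => M i (w ν))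
        (by
          have h : ∀ᶠ ν in (F : Filter ℕ), M i (w ν) ∈ K := Filter.Eventually.of_forall hMK
          rw [Filter.le_principal_iff]
          exact h)
      have hWt : Filter.Tendsto (fun ν => M i (w ν)) F (nhds W) := hW
      have hJW : J W = J Ustar := tendsto_nhds_unique
        (hlimcont J _ W hcont (hKD _ hWK) (fun ν => hKD _ (hMK ν)) hWt) hlim
      have hWV : W - Ustar ∈ V i :=
        (Submodule.closed_of_finiteDimensional (V i)).mem_of_tendsto (hWt.sub hwt)
          (Filter.Eventually.of_forall fun ν => hVmem i _ (hwD ν))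
      have hWeq : W = Ustar := by
        refine (hunique Ustar hSD i).unique ⟨hWV, fun z hz => ?_⟩ ⟨by simp, hmin⟩
        rw [hJW]
        exact hmin z hz
      rw [hWeq] at hWt
      intro j hj
      rcases List.mem_cons.1 hj with rfl | hj
      · intro v hv
        exact hmin _ (by simpa using hv)
      · exact ih (fun ν => M i (w ν)) hMK hWt hle hwl j hj
  intro i
  exact key (List.finRange n) U hUK hFU (fun _ => le_rfl) hstep' i (List.mem_finRange i)
end
end
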